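/- arXiv:2307.15564 — 3 statements merged into one kernel-verified Lean document; each statement's English description precedes it below -/
import Mathlib

section
/- Let U ⊆ ℝⁿ be open with coordinates x = (x¹,…,xⁿ), let g₁,…,gₙ, K₁,…,Kₙ : U → ℝ be smooth, and let ε₁,…,εₙ ∈ {−1,1}. Define H, F : U × ℝⁿ → ℝ by H(x,p) = (1/2)·Σᵢ εᵢ·exp(gᵢ(x))·pᵢ² and F(x,p) = Σᵢ εᵢ·exp(gᵢ(x))·Kᵢ(x)·pᵢ². Then the canonical Poisson bracket satisfies, for all (x,p) ∈ U × ℝⁿ: {H,F}(x,p) = Σᵢ exp(2gᵢ(x))·(∂Kᵢ/∂xⁱ)(x)·pᵢ³ + Σ_{i≠j} εᵢεⱼ·exp(gᵢ(x)+gⱼ(x))·( (Kᵢ(x)−Kⱼ(x))·(∂gᵢ/∂xʲ)(x) + (∂Kᵢ/∂xʲ)(x) )·pᵢ²·pⱼ. -/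
/-!
For `H = ½ ∑ aᵢ(x) pᵢ²` and `F = ∑ aᵢ(x) Kᵢ(x) pᵢ²` the product rule gives, in the coefficient of
`pᵢ² pⱼ`, the expression `aⱼ (Kᵢ ∂ⱼaᵢ + aᵢ ∂ⱼKᵢ) - aⱼ Kⱼ ∂ⱼaᵢ = aⱼ ((Kᵢ - Kⱼ) ∂ⱼaᵢ + aᵢ ∂ⱼKᵢ)`.
For `aᵢ = εᵢ exp gᵢ` one has `∂ⱼaᵢ = aᵢ ∂ⱼgᵢ`, and on the diagonal `i = j` the difference `Kᵢ - Kⱼ`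
vanishes and `εᵢ² = 1`.
-/

open scoped BigOperators

/-- Partial derivative of `f : ℝⁿ → ℝ` in the `j`-th coordinate direction. -/
noncomputable def pd {n : ℕ} (f : (Fin n → ℝ) → ℝ) (j : Fin n) (x : Fin n → ℝ) : ℝ :=
  fderiv ℝ f x (Pi.single j 1)

/-- The canonical Poisson bracket of two functions on `ℝⁿ × ℝⁿ` (positions `x`, momenta `p`):
`{H,F} = Σ_s (∂H/∂p_s · ∂F/∂x^s − ∂H/∂x^s · ∂F/∂p_s)`. -/
noncomputable def poisson {n : ℕ} (H F : ((Fin n → ℝ) × (Fin n → ℝ)) → ℝ)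
    (q : (Fin n → ℝ) × (Fin n → ℝ)) : ℝ :=
  ∑ s : Fin n,
    (fderiv ℝ H q ((0 : Fin n → ℝ), Pi.single s 1) * fderiv ℝ F q (Pi.single s 1, (0 : Fin n → ℝ))
      - fderiv ℝ H q (Pi.single s 1, (0 : Fin n → ℝ)) *
          fderiv ℝ F q ((0 : Fin n → ℝ), Pi.single s 1))

section FiberQuadratic

variable {𝕜 E ι : Type*} [NontriviallyNormedField 𝕜] [NormedAddCommGroup E] [NormedSpace 𝕜 E]
  [Fintype ι]

/-- The function `(x, p) ↦ ∑ i, a i x * p i ^ 2`, a diagonal quadratic form in the momenta `p` whose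
coefficients depend on the position `x`; `H` and `F` of the bracket formula are of this type. -/
def fiberQuadratic (a : ι → E → 𝕜) (q : E × (ι → 𝕜)) : 𝕜 :=
  ∑ i, a i q.1 * q.2 i ^ 2

variable {a : ι → E → 𝕜} {x : E}

theorem hasFDerivAt_fiberQuadratic {a' : ι → E →L[𝕜] 𝕜} (ha : ∀ i, HasFDerivAt (a i) (a' i) x)
    (p : ι → 𝕜) :
    HasFDerivAt (fiberQuadratic a)
      (∑ i, (p i ^ 2 • (a' i).comp (.fst 𝕜 E (ι → 𝕜)) +
        (2 * a i x * p i) • (ContinuousLinearMap.proj i).comp (.snd 𝕜 E (ι → 𝕜)))) (x, p) := by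
  refine HasFDerivAt.fun_sum fun i _ => ?_
  have hcoeff : HasFDerivAt (fun q : E × (ι → 𝕜) => a i q.1) _ (x, p) :=
    (ha i).comp (x, p) hasFDerivAt_fst
  have hmomentum : HasFDerivAt (fun q : E × (ι → 𝕜) => q.2 i) _ (x, p) :=
    ((ContinuousLinearMap.proj (R := 𝕜) i).comp (.snd 𝕜 E (ι → 𝕜))).hasFDerivAt
  refine (hcoeff.mul (hmomentum.pow 2)).congr_fderiv ?_
  simp only [Nat.add_one_sub_one, pow_one, nsmul_eq_mul, Nat.cast_ofNat]
  module

theorem fderiv_fiberQuadratic_position (ha : ∀ i, DifferentiableAt 𝕜 (a i) x) (p : ι → 𝕜) (v : E) :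
    fderiv 𝕜 (fiberQuadratic a) (x, p) (v, 0) = ∑ i, fderiv 𝕜 (a i) x v * p i ^ 2 := by
  simp [(hasFDerivAt_fiberQuadratic (fun i => (ha i).hasFDerivAt) p).fderiv, mul_comm]

theorem fderiv_fiberQuadratic_momentum [DecidableEq ι] (ha : ∀ i, DifferentiableAt 𝕜 (a i) x)
    (p : ι → 𝕜) (s : ι) :
    fderiv 𝕜 (fiberQuadratic a) (x, p) (0, Pi.single s 1) = 2 * a s x * p s := by
  simp [(hasFDerivAt_fiberQuadratic (fun i => (ha i).hasFDerivAt) p).fderiv, Pi.single_apply]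

end FiberQuadratic

section PartialDerivative

variable {n : ℕ} {f g : (Fin n → ℝ) → ℝ} {x : Fin n → ℝ}

theorem pd_mul (hf : DifferentiableAt ℝ f x) (hg : DifferentiableAt ℝ g x) (j : Fin n) :
    pd (fun y => f y * g y) j x = f x * pd g j x + g x * pd f j x := by
  simp [pd, fderiv_fun_mul hf hg]

theorem pd_const_mul_exp (c : ℝ) (hg : DifferentiableAt ℝ g x) (j : Fin n) :
    pd (fun y => c * Real.exp (g y)) j x = c * Real.exp (g x) * pd g j x := by
  simp [pd, (hg.hasFDerivAt.exp.const_mul c).fderiv, mul_assoc]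

end PartialDerivative

section Bracket

variable {n : ℕ} {x : Fin n → ℝ}

theorem poisson_const_mul_left (c : ℝ) (H F : (Fin n → ℝ) × (Fin n → ℝ) → ℝ)
    (q : (Fin n → ℝ) × (Fin n → ℝ)) :
    poisson (fun q => c * H q) F q = c * poisson H F q := by
  have hfderiv : fderiv ℝ (fun q => c * H q) = c • fderiv ℝ H := fderiv_const_smul_field c
  simp [poisson, hfderiv, Finset.mul_sum, mul_sub, mul_assoc]

theorem poisson_fiberQuadratic {a b : Fin n → (Fin n → ℝ) → ℝ}
    (ha : ∀ i, DifferentiableAt ℝ (a i) x) (hb : ∀ i, DifferentiableAt ℝ (b i) x)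
    (p : Fin n → ℝ) :
    poisson (fiberQuadratic a) (fiberQuadratic b) (x, p) =
      2 * ∑ i, ∑ j, (a j x * pd (b i) j x - b j x * pd (a i) j x) * p i ^ 2 * p j := by
  rw [Finset.sum_comm, Finset.mul_sum]
  refine Finset.sum_congr rfl fun s _ => ?_
  rw [fderiv_fiberQuadratic_momentum ha, fderiv_fiberQuadratic_momentum hb,
    fderiv_fiberQuadratic_position ha, fderiv_fiberQuadratic_position hb,
    Finset.mul_sum, Finset.sum_mul, ← Finset.sum_sub_distrib, Finset.mul_sum]
  exact Finset.sum_congr rfl fun i _ => by simp only [pd]; ring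

theorem poisson_half_fiberQuadratic_mul {a K : Fin n → (Fin n → ℝ) → ℝ}
    (ha : ∀ i, DifferentiableAt ℝ (a i) x) (hK : ∀ i, DifferentiableAt ℝ (K i) x)
    (p : Fin n → ℝ) :
    poisson (fun q => (1 / 2 : ℝ) * fiberQuadratic a q)
        (fiberQuadratic fun i y => a i y * K i y) (x, p) =
      ∑ i, ∑ j, a j x * ((K i x - K j x) * pd (a i) j x + a i x * pd (K i) j x) *
        p i ^ 2 * p j := by
  rw [poisson_const_mul_left, poisson_fiberQuadratic ha fun i => (ha i).fun_mul (hK i), ← mul_assoc,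
    one_div, inv_mul_cancel₀ two_ne_zero, one_mul]
  refine Finset.sum_congr rfl fun i _ => Finset.sum_congr rfl fun j _ => ?_
  rw [pd_mul (ha i) (hK i)]
  ring

end Bracket

theorem sum_sum_eq_sum_diag_add_sum_ne {ι M : Type*} [Fintype ι] [DecidableEq ι] [AddCommMonoid M]
    (f : ι → ι → M) :
    ∑ i, ∑ j, f i j = ∑ i, f i i + ∑ i, ∑ j ∈ Finset.univ.filter (fun j => j ≠ i), f i j := by
  rw [← Finset.sum_add_distrib]
  refine Finset.sum_congr rfl fun i _ => ?_
  rw [Finset.filter_ne', Finset.add_sum_erase _ _ (Finset.mem_univ i)]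

theorem poisson_bracket_formula_general {n : ℕ} {g K : Fin n → (Fin n → ℝ) → ℝ} {x : Fin n → ℝ}
    (hg : ∀ i, DifferentiableAt ℝ (g i) x) (hK : ∀ i, DifferentiableAt ℝ (K i) x)
    (ε p : Fin n → ℝ) :
    poisson
        (fun q => (1 / 2 : ℝ) * ∑ i, ε i * Real.exp (g i q.1) * (q.2 i) ^ 2)
        (fun q => ∑ i, ε i * Real.exp (g i q.1) * K i q.1 * (q.2 i) ^ 2) (x, p) =
      (∑ i, ε i ^ 2 * Real.exp (2 * g i x) * pd (K i) i x * (p i) ^ 3)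
        + ∑ i, ∑ j ∈ Finset.univ.filter (fun j => j ≠ i),
            ε i * ε j * Real.exp (g i x + g j x) *
              ((K i x - K j x) * pd (g i) j x + pd (K i) j x) * (p i) ^ 2 * p j := by
  let a : Fin n → (Fin n → ℝ) → ℝ := fun i y => ε i * Real.exp (g i y)
  have ha (i : Fin n) : DifferentiableAt ℝ (a i) x := (hg i).exp.const_mul (ε i)
  have hcoeff (i j : Fin n) :
      a j x * ((K i x - K j x) * pd (a i) j x + a i x * pd (K i) j x) * p i ^ 2 * p j =
        ε i * ε j * Real.exp (g i x + g j x) *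
          ((K i x - K j x) * pd (g i) j x + pd (K i) j x) * p i ^ 2 * p j := by
    rw [pd_const_mul_exp (ε i) (hg i), Real.exp_add]
    ring
  refine (poisson_half_fiberQuadratic_mul ha hK p).trans ?_
  simp only [hcoeff]
  rw [sum_sum_eq_sum_diag_add_sum_ne]
  congr 1
  refine Finset.sum_congr rfl fun i _ => ?_
  rw [two_mul]
  ring

theorem poisson_bracket_formula {n : ℕ} (U : Set (Fin n → ℝ)) (hU : IsOpen U)
    (g K : Fin n → (Fin n → ℝ) → ℝ)
    (hg : ∀ i, ContDiffOn ℝ (⊤ : ℕ∞) (g i) U) (hK : ∀ i, ContDiffOn ℝ (⊤ : ℕ∞) (K i) U)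
    (ε : Fin n → ℝ) (hε : ∀ i, ε i = 1 ∨ ε i = -1) :
    ∀ x ∈ U, ∀ p : Fin n → ℝ,
      poisson
        (fun q => (1 / 2 : ℝ) * ∑ i, ε i * Real.exp (g i q.1) * (q.2 i) ^ 2)
        (fun q => ∑ i, ε i * Real.exp (g i q.1) * K i q.1 * (q.2 i) ^ 2) (x, p) =
      (∑ i, Real.exp (2 * g i x) * pd (K i) i x * (p i) ^ 3)
        + ∑ i, ∑ j ∈ Finset.univ.filter (fun j => j ≠ i),
            ε i * ε j * Real.exp (g i x + g j x) *
              ((K i x - K j x) * pd (g i) j x + pd (K i) j x) * (p i) ^ 2 * p j := by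
  intro x hx p
  have hdiff {f : (Fin n → ℝ) → ℝ} (hf : ContDiffOn ℝ (⊤ : ℕ∞) f U) : DifferentiableAt ℝ f x :=
    (hf.contDiffAt (hU.mem_nhds hx)).differentiableAt (by simp)
  have hε_sq (i : Fin n) : ε i ^ 2 = 1 := sq_eq_one_iff.mpr (hε i)
  simpa only [hε_sq, one_mul] using
    poisson_bracket_formula_general (fun i => hdiff (hg i)) (fun i => hdiff (hK i)) ε p
end

section
/- Let U ⊆ ℝⁿ be a convex open set and let K₁,…,Kₙ : U → ℝ be smooth with Kᵢ(x) ≠ Kⱼ(x) for all i ≠ j and all x ∈ U. Suppose K₁,…,Kₙ satisfy the semi-Hamiltonian (Tsarev) conditions on U. Then for every index i there exists a smooth function gᵢ : U → ℝ such that for all j ≠ i and all x ∈ U: (∂gᵢ/∂xʲ)(x) = (Kⱼ(x) − Kᵢ(x))⁻¹ · (∂Kᵢ/∂xʲ)(x). -/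
open scoped BigOperators

/-- The semi-Hamiltonian (Tsarev) conditions for functions `K₁,…,Kₙ` on `U ⊆ ℝⁿ`:
for all pairwise distinct `i, j, k` and all `x ∈ U`,
`∂/∂xᵏ( (Kⱼ − Kᵢ)⁻¹ ∂Kᵢ/∂xʲ ) = ∂/∂xʲ( (Kₖ − Kᵢ)⁻¹ ∂Kᵢ/∂xᵏ )`. -/
def SemiHamiltonian {n : ℕ} (K : Fin n → (Fin n → ℝ) → ℝ) (U : Set (Fin n → ℝ)) : Prop :=
  ∀ i j k : Fin n, i ≠ j → j ≠ k → i ≠ k → ∀ x ∈ U,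
    pd (fun y => (K j y - K i y)⁻¹ * pd (K i) j y) k x
      = pd (fun y => (K k y - K i y)⁻¹ * pd (K i) k y) j x

/-!
Closedness of the coefficients `(Kⱼ - Kᵢ)⁻¹ ∂ⱼKᵢ`, `j ≠ i`, is only required in the directions
`j ≠ i`, so `gᵢ` is built leaf by leaf on the slices `xⁱ = const` of `U`. On each convex slice the
Poincaré lemma gives a primitive, namely the integral along segments issuing from a base point. For
these primitives to fit together smoothly the base point has to depend smoothly on `xⁱ`: a
partition of unity on the projection of `U` glues local base points, and the glued point stays in
its slice because slices are convex.
-/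

open Set Filter Topology
open AffineMap (lineMap lineMap_apply_module')
open ContinuousLinearMap (inl proj)
open scoped Manifold ContDiff Interval

universe u

section ParametricIntervalIntegral

theorem exists_eventually_forall_norm_le_of_isCompact {X Y G : Type*} [TopologicalSpace X]
    [TopologicalSpace Y] [SeminormedAddCommGroup G] {f : X × Y → G} {x : X} {s : Set Y}
    (hs : IsCompact s) (hf : ∀ t ∈ s, ContinuousAt f (x, t)) :
    ∃ C, ∀ᶠ y in 𝓝 x, ∀ t ∈ s, ‖f (y, t)‖ ≤ C := by
  have hslice : ContinuousOn (fun t ↦ f (x, t)) s := fun t ht ↦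
    ((hf t ht).comp (Continuous.prodMk_right x).continuousAt).continuousWithinAt
  obtain ⟨C, hC⟩ := hs.exists_bound_of_continuousOn hslice
  refine ⟨C + 1, hs.eventually_forall_of_forall_eventually fun t ht ↦ ?_⟩
  exact (hf t ht).norm.eventually_le_const ((hC t ht).trans_lt (lt_add_one C))

theorem eventually_continuousOn_slice_of_isCompact {X Y Z : Type*} [TopologicalSpace X]
    [TopologicalSpace Y] [TopologicalSpace Z] {f : X × Y → Z} {x : X} {s : Set Y}
    (hs : IsCompact s) (hf : ∀ t ∈ s, ∀ᶠ p in 𝓝 (x, t), ContinuousAt f p) :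
    ∀ᶠ y in 𝓝 x, ContinuousOn (fun t ↦ f (y, t)) s := by
  filter_upwards [hs.eventually_forall_of_forall_eventually
    (P := fun y t ↦ ContinuousAt f (y, t)) hf] with y hy t ht
  exact ((hy t ht).comp (Continuous.prodMk_right y).continuousAt).continuousWithinAt

variable {G : Type*} [NormedAddCommGroup G] [NormedSpace ℝ G] {a b : ℝ}

theorem continuousAt_parametric_intervalIntegral {X : Type*} [TopologicalSpace X]
    [FirstCountableTopology X] {F : X × ℝ → G} {x : X}
    (hF : ∀ t ∈ [[a, b]], ∀ᶠ p in 𝓝 (x, t), ContinuousAt F p) :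
    ContinuousAt (fun y ↦ ∫ t in a..b, F (y, t)) x := by
  have hFx : ∀ t ∈ [[a, b]], ContinuousAt F (x, t) := fun t ht ↦ (hF t ht).self_of_nhds
  obtain ⟨C, hC⟩ := exists_eventually_forall_norm_le_of_isCompact isCompact_uIcc hFx
  refine intervalIntegral.continuousAt_of_dominated_interval (bound := fun _ ↦ C) ?_ ?_
    intervalIntegrable_const ?_
  · filter_upwards [eventually_continuousOn_slice_of_isCompact isCompact_uIcc hF] with y hy
    exact (hy.mono uIoc_subset_uIcc).aestronglyMeasurable measurableSet_uIoc
  · filter_upwards [hC] with y hy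
    exact .of_forall fun t ht ↦ hy t (uIoc_subset_uIcc ht)
  · exact .of_forall fun t ht ↦
      (hFx t (uIoc_subset_uIcc ht)).comp (f := fun y ↦ (y, t)) (by fun_prop)

theorem hasFDerivAt_parametric_intervalIntegral {E : Type*} [NormedAddCommGroup E]
    [NormedSpace ℝ E] {F : E × ℝ → G} {x : E} (hF : ∀ t ∈ [[a, b]], ContDiffAt ℝ 1 F (x, t)) :
    HasFDerivAt (fun y ↦ ∫ t in a..b, F (y, t))
      (∫ t in a..b, fderiv ℝ F (x, t) ∘L inl ℝ E ℝ) x := by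
  have hF_near : ∀ t ∈ [[a, b]], ∀ᶠ p in 𝓝 (x, t), ContDiffAt ℝ 1 F p := fun t ht ↦
    (hF t ht).eventually (by simp)
  have hF'_cont : ∀ t ∈ [[a, b]], ContinuousAt (fun p ↦ fderiv ℝ F p ∘L inl ℝ E ℝ) (x, t) :=
    fun t ht ↦ ((hF t ht).continuousAt_fderiv one_ne_zero).clm_comp continuousAt_const
  have hF_slice := eventually_continuousOn_slice_of_isCompact isCompact_uIcc fun t ht ↦
    (hF_near t ht).mono fun _ hp ↦ hp.continuousAt
  obtain ⟨C, hC⟩ := exists_eventually_forall_norm_le_of_isCompact isCompact_uIcc hF'_cont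
  refine intervalIntegral.hasFDerivAt_integral_of_dominated_of_fderiv_le
    (F := fun y t ↦ F (y, t)) (F' := fun y t ↦ fderiv ℝ F (y, t) ∘L inl ℝ E ℝ)
    (bound := fun _ ↦ C)
    (hC.and (isCompact_uIcc.eventually_forall_of_forall_eventually
      (P := fun y t ↦ ContDiffAt ℝ 1 F (y, t)) hF_near)) ?_
    hF_slice.self_of_nhds.intervalIntegrable ?_
    (.of_forall fun t ht y hy ↦ hy.1 t (uIoc_subset_uIcc ht)) intervalIntegrable_const
    (.of_forall fun t ht y hy ↦ ?_)
  · filter_upwards [hF_slice] with y hy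
    exact (hy.mono uIoc_subset_uIcc).aestronglyMeasurable measurableSet_uIoc
  · have hF'_slice : ContinuousOn (fun t ↦ fderiv ℝ F (x, t) ∘L inl ℝ E ℝ) [[a, b]] := fun t ht ↦
      ((hF'_cont t ht).comp (Continuous.prodMk_right x).continuousAt).continuousWithinAt
    exact (hF'_slice.mono uIoc_subset_uIcc).aestronglyMeasurable measurableSet_uIoc
  · have hF_diff := (hy.2 t (uIoc_subset_uIcc ht)).differentiableAt one_ne_zero
    exact hF_diff.hasFDerivAt.comp y (hasFDerivAt_prodMk_left y t)

-- `E` and `G` share a universe so that the induction can pass from `G` to `E →L[ℝ] G`.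
theorem contDiffAt_nat_parametric_intervalIntegral {E G : Type u} [NormedAddCommGroup E]
    [NormedSpace ℝ E] [NormedAddCommGroup G] [NormedSpace ℝ G] {F : E × ℝ → G} {x : E} (m : ℕ)
    (hF : ∀ t ∈ [[a, b]], ContDiffAt ℝ m F (x, t)) :
    ContDiffAt ℝ m (fun y ↦ ∫ t in a..b, F (y, t)) x := by
  induction m generalizing G with
  | zero =>
    have hF_near : ∀ᶠ y in 𝓝 x, ∀ t ∈ [[a, b]], ContDiffAt ℝ 0 F (y, t) :=
      isCompact_uIcc.eventually_forall_of_forall_eventually fun t ht ↦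
        (hF t ht).eventually (by simp)
    refine contDiffAt_zero.2 ⟨_, hF_near, fun y hy ↦ ContinuousAt.continuousWithinAt ?_⟩
    exact continuousAt_parametric_intervalIntegral fun t ht ↦
      ((hy t ht).eventually (by simp)).mono fun _ hp ↦ hp.continuousAt
  | succ m ih =>
    push_cast at hF ⊢
    have hF_near : ∀ᶠ y in 𝓝 x, ∀ t ∈ [[a, b]], ContDiffAt ℝ (m + 1) F (y, t) :=
      isCompact_uIcc.eventually_forall_of_forall_eventually fun t ht ↦
        (hF t ht).eventually (by exact_mod_cast ENat.natCast_ne_top (m + 1))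
    refine contDiffAt_succ_iff_hasFDerivAt.2
      ⟨fun y ↦ ∫ t in a..b, fderiv ℝ F (y, t) ∘L inl ℝ E ℝ, ⟨_, hF_near, fun y hy ↦ ?_⟩, ?_⟩
    · exact hasFDerivAt_parametric_intervalIntegral fun t ht ↦ (hy t ht).of_le le_add_self
    · exact ih fun t ht ↦ (hF t ht).fderiv_right_succ.clm_comp contDiffAt_const

theorem contDiffAt_parametric_intervalIntegral {E G : Type u} [NormedAddCommGroup E]
    [NormedSpace ℝ E] [NormedAddCommGroup G] [NormedSpace ℝ G] {F : E × ℝ → G} {x : E} {n : ℕ∞}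
    (hF : ∀ t ∈ [[a, b]], ContDiffAt ℝ n F (x, t)) :
    ContDiffAt ℝ n (fun y ↦ ∫ t in a..b, F (y, t)) x := by
  cases n with
  | top =>
    exact contDiffAt_infty.2 fun m ↦
      contDiffAt_nat_parametric_intervalIntegral m fun t ht ↦ contDiffAt_infty.1 (hF t ht) m
  | coe m => exact contDiffAt_nat_parametric_intervalIntegral m hF

end ParametricIntervalIntegral

theorem contDiffAt_curveIntegral_segment {E G : Type u} [NormedAddCommGroup E] [NormedSpace ℝ E]
    [NormedAddCommGroup G] [NormedSpace ℝ G] {η : E → E →L[ℝ] G} {c d : E → E} {x : E} {n : ℕ∞}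
    (hc : ContDiffAt ℝ n c x) (hd : ContDiffAt ℝ n d x)
    (hη : ∀ y ∈ segment ℝ (c x) (d x), ContDiffAt ℝ n η y) :
    ContDiffAt ℝ n (fun y ↦ ∫ᶜ z in .segment (c y) (d y), η z) x := by
  simp only [curveIntegral_segment]
  refine contDiffAt_parametric_intervalIntegral
    (F := fun p ↦ η (lineMap (c p.1) (d p.1) p.2) (d p.1 - c p.1)) fun t ht ↦ ?_
  have hc' : ContDiffAt ℝ n (fun p : E × ℝ ↦ c p.1) (x, t) := hc.comp (x, t) contDiffAt_fst
  have hd' : ContDiffAt ℝ n (fun p : E × ℝ ↦ d p.1) (x, t) := hd.comp (x, t) contDiffAt_fst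
  have hline : ContDiffAt ℝ n (fun p : E × ℝ ↦ lineMap (c p.1) (d p.1) p.2) (x, t) := by
    simp only [lineMap_apply_module']
    exact (contDiffAt_snd.smul (hd'.sub hc')).add hc'
  have hmem : lineMap (c x) (d x) t ∈ segment ℝ (c x) (d x) := by
    rw [uIcc_of_le zero_le_one] at ht
    exact segment_eq_image_lineMap ℝ (c x) (d x) ▸ mem_image_of_mem _ ht
  exact ((hη _ hmem).comp (x, t) hline).clm_apply (hd'.sub hc')

section SmoothSelection

variable {B F : Type*} [NormedAddCommGroup B] [NormedSpace ℝ B] [FiniteDimensional ℝ B]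
  [NormedAddCommGroup F] [NormedSpace ℝ F]

theorem exists_contDiffOn_forall_mem_convex_of_local {s : Set B} (hs : IsOpen s) {t : B → Set F}
    {n : ℕ∞} (ht : ∀ x ∈ s, Convex ℝ (t x))
    (hloc : ∀ x ∈ s, ∃ V ∈ 𝓝 x, ∃ f : B → F, ContDiffOn ℝ n f V ∧ ∀ y ∈ V, f y ∈ t y) :
    ∃ f : B → F, ContDiffOn ℝ n f s ∧ ∀ x ∈ s, f x ∈ t x := by
  let S : TopologicalSpace.Opens B := ⟨s, hs⟩
  have : LocallyCompactSpace S := hs.locallyCompactSpace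
  obtain ⟨f, hf⟩ := exists_contMDiffMap_forall_mem_convex_of_local (M := S) (n := n) 𝓘(ℝ, B)
    (t := fun x ↦ t x) (fun x ↦ ht x x.2) fun x ↦ by
      obtain ⟨V, hV, f, hf, hft⟩ := hloc x x.2
      exact ⟨_, continuousAt_subtype_val hV, fun y ↦ f y,
        hf.contMDiffOn.comp contMDiff_subtype_val.contMDiffOn Subset.rfl, fun y hy ↦ hft y hy⟩
  have hext : ∀ x : S, Function.extend Subtype.val f 0 x = f x :=
    Subtype.val_injective.extend_apply f 0
  refine ⟨Function.extend Subtype.val f 0, fun x hx ↦ ContDiffAt.contDiffWithinAt ?_,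
    fun x hx ↦ hext ⟨x, hx⟩ ▸ hf ⟨x, hx⟩⟩
  rw [← contMDiffAt_iff_contDiffAt, ← contMDiffAt_subtype_iff (U := S) (x := ⟨x, hx⟩)]
  simpa only [hext] using f.contMDiff ⟨x, hx⟩

theorem exists_contDiffOn_section_of_convex {π : F →L[ℝ] B} (hπ : Function.Surjective π)
    {U : Set F} (hU : IsOpen U) (hconv : Convex ℝ U) :
    ∃ σ : B → F, ContDiffOn ℝ ∞ σ (π '' U) ∧ ∀ c ∈ π '' U, σ c ∈ U ∩ π ⁻¹' {c} := by
  obtain ⟨ρ, hρ⟩ := π.exists_rightInverse_of_surjective (LinearMap.range_eq_top.2 hπ)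
  have hρ_apply (c : B) : π (ρ c) = c := DFunLike.congr_fun hρ c
  have hopen : IsOpen (π '' U) :=
    (π : F →ₗ[ℝ] B).isOpenMap_of_finiteDimensional hπ U hU
  refine exists_contDiffOn_forall_mem_convex_of_local (n := ⊤) hopen
    (fun c _ ↦ hconv.inter ((convex_singleton c).linear_preimage (π : F →ₗ[ℝ] B))) ?_
  rintro _ ⟨p, hp, rfl⟩
  have hcont : ContinuousAt (fun c ↦ p + ρ (c - π p)) (π p) := by fun_prop
  have hmem : ∀ᶠ c in 𝓝 (π p), p + ρ (c - π p) ∈ U :=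
    hcont.eventually_mem (hU.mem_nhds (by simpa using hp))
  refine ⟨_, hmem, fun c ↦ p + ρ (c - π p), by fun_prop, fun c hc ↦ ⟨hc, ?_⟩⟩
  simp [hρ_apply]

end SmoothSelection

section LeafwisePoincare

theorem tangentConeAt_inter_fiber {𝕜 E B : Type*} [NontriviallyNormedField 𝕜]
    [NormedAddCommGroup E] [NormedSpace 𝕜 E] [NormedAddCommGroup B] [NormedSpace 𝕜 B]
    (π : E →L[𝕜] B) {U : Set E} {x : E} (hU : U ∈ 𝓝 x) :
    tangentConeAt 𝕜 (U ∩ π ⁻¹' {π x}) x = {v | π v = 0} := by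
  rw [inter_comm, tangentConeAt_inter_nhds hU]
  refine Subset.antisymm (fun v hv ↦ ?_) fun v (hv : π v = 0) ↦ ?_
  · have hconst : HasFDerivWithinAt π (0 : E →L[𝕜] B) (π ⁻¹' {π x}) x :=
      (hasFDerivWithinAt_const (π x) x _).congr (fun y hy ↦ hy) rfl
    exact π.hasFDerivWithinAt.unique_on hconst hv
  · exact mem_tangentConeAt_of_add_smul_mem (l := 𝓝[≠] (0 : 𝕜)) tendsto_id
      (.of_forall fun t ↦ by simp [hv])

/-- The `1`-form `η` is closed on `U` along the leaves of `π`, the intersections of `U` with the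
fibres of `π`: the restriction of its exterior derivative to `ker π` vanishes. -/
def IsLeafwiseClosedOn {E B G : Type*} [NormedAddCommGroup E] [NormedSpace ℝ E]
    [NormedAddCommGroup B] [NormedSpace ℝ B] [NormedAddCommGroup G] [NormedSpace ℝ G]
    (π : E →L[ℝ] B) (η : E → E →L[ℝ] G) (U : Set E) : Prop :=
  ∀ x ∈ U, ∀ v w, π v = 0 → π w = 0 → fderiv ℝ η x v w = fderiv ℝ η x w v

variable {E G : Type u} {B : Type*} [NormedAddCommGroup E] [NormedSpace ℝ E]
  [NormedAddCommGroup B] [NormedSpace ℝ B]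
  [NormedAddCommGroup G] [NormedSpace ℝ G] [CompleteSpace G]
  {π : E →L[ℝ] B} {η : E → E →L[ℝ] G} {U : Set E}

theorem hasFDerivWithinAt_curveIntegral_segment_of_isLeafwiseClosedOn (hU : IsOpen U)
    (hconv : Convex ℝ U) (hη : DifferentiableOn ℝ η U) (hclosed : IsLeafwiseClosedOn π η U)
    {p x : E} (hp : p ∈ U) (hx : x ∈ U) (hpx : π p = π x) :
    HasFDerivWithinAt (fun y ↦ ∫ᶜ z in .segment p y, η z) (η x) (U ∩ π ⁻¹' {π x}) x := by
  have hleaf_convex : Convex ℝ (U ∩ π ⁻¹' {π x}) :=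
    hconv.inter ((convex_singleton (π x)).linear_preimage (π : E →ₗ[ℝ] B))
  have hη_leaf : ∀ y ∈ U ∩ π ⁻¹' {π x},
      HasFDerivWithinAt η (fderiv ℝ η y) (U ∩ π ⁻¹' {π x}) y := fun y hy ↦
    (hη.differentiableAt (hU.mem_nhds hy.1)).hasFDerivAt.hasFDerivWithinAt
  refine hleaf_convex.hasFDerivWithinAt_curveIntegral_segment_of_hasFDerivWithinAt_symmetric
    hη_leaf (fun y hy v hv w hw ↦ ?_) ⟨hp, hpx⟩ ⟨hx, rfl⟩
  have hy_fiber : π y = π x := hy.2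
  rw [← hy_fiber, tangentConeAt_inter_fiber π (hU.mem_nhds hy.1)] at hv hw
  exact hclosed y hy.1 v w hv hw

theorem exists_leafwise_primitive [FiniteDimensional ℝ B] (hπ : Function.Surjective π)
    (hU : IsOpen U) (hconv : Convex ℝ U) (hη : ContDiffOn ℝ ∞ η U)
    (hclosed : IsLeafwiseClosedOn π η U) :
    ∃ g : E → G, ContDiffOn ℝ ∞ g U ∧ ∀ x ∈ U, ∀ v, π v = 0 → fderiv ℝ g x v = η x v := by
  obtain ⟨σ, hσ, hσU⟩ := exists_contDiffOn_section_of_convex hπ hU hconv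
  have hσ_mem : ∀ x ∈ U, σ (π x) ∈ U := fun x hx ↦ (hσU _ ⟨x, hx, rfl⟩).1
  have hσ_fiber : ∀ x ∈ U, π (σ (π x)) = π x := fun x hx ↦ (hσU _ ⟨x, hx, rfl⟩).2
  have hbase : ContDiffOn ℝ ∞ (fun x ↦ σ (π x)) U :=
    hσ.comp π.contDiff.contDiffOn (mapsTo_image π U)
  let g : E → G := fun x ↦ ∫ᶜ z in .segment (σ (π x)) x, η z
  have hg : ∀ x ∈ U, ContDiffAt ℝ ∞ g x := fun x hx ↦
    contDiffAt_curveIntegral_segment (n := ⊤) (hbase.contDiffAt (hU.mem_nhds hx)) contDiffAt_id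
      fun y hy ↦ hη.contDiffAt (hU.mem_nhds (hconv.segment_subset (hσ_mem x hx) hx hy))
  refine ⟨g, fun x hx ↦ (hg x hx).contDiffWithinAt, fun x hx v hv ↦ ?_⟩
  have hg_leaf : HasFDerivWithinAt g (η x) (U ∩ π ⁻¹' {π x}) x := by
    refine (hasFDerivWithinAt_curveIntegral_segment_of_isLeafwiseClosedOn hU hconv
      (hη.differentiableOn (by simp)) hclosed (hσ_mem x hx) hx (hσ_fiber x hx)).congr
      (fun y hy ↦ ?_) rfl
    have hy_fiber : π y = π x := hy.2
    simp only [g, curveIntegral_segment, hy_fiber]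
  have hg_ambient := ((hg x hx).differentiableAt (by simp)).hasFDerivAt.hasFDerivWithinAt
    (s := U ∩ π ⁻¹' {π x})
  exact hg_ambient.unique_on hg_leaf (by rwa [tangentConeAt_inter_fiber π (hU.mem_nhds hx)])

end LeafwisePoincare

section Coordinates

variable {n : ℕ} {U : Set (Fin n → ℝ)}

theorem contDiffOn_pd {f : (Fin n → ℝ) → ℝ} (hU : IsOpen U) (hf : ContDiffOn ℝ ∞ f U)
    (j : Fin n) : ContDiffOn ℝ ∞ (pd f j) U :=
  (hf.fderiv_of_isOpen hU (by simp)).clm_apply contDiffOn_const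

theorem fderiv_eq_sum_pd (f : (Fin n → ℝ) → ℝ) (x v : Fin n → ℝ) :
    fderiv ℝ f x v = ∑ k, v k * pd f k x := by
  calc fderiv ℝ f x v = fderiv ℝ f x (∑ k, v k • Pi.single k 1) := by
        rw [← pi_eq_sum_univ' v]
    _ = ∑ k, v k * pd f k x := by simp only [map_sum, map_smul, smul_eq_mul, pd]

/-- The `1`-form `∑ⱼ bⱼ dxʲ`, the sum running over the directions `j ∈ J`. -/
noncomputable def coordOneForm (J : Finset (Fin n)) (b : Fin n → (Fin n → ℝ) → ℝ)
    (x : Fin n → ℝ) : (Fin n → ℝ) →L[ℝ] ℝ :=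
  ∑ j ∈ J, b j x • proj j

variable {J : Finset (Fin n)} {b : Fin n → (Fin n → ℝ) → ℝ}

theorem coordOneForm_apply (x v : Fin n → ℝ) : coordOneForm J b x v = ∑ j ∈ J, b j x * v j := by
  simp [coordOneForm]

theorem fderiv_coordOneForm_apply {x : Fin n → ℝ} (hb : ∀ j ∈ J, DifferentiableAt ℝ (b j) x)
    (v w : Fin n → ℝ) :
    fderiv ℝ (coordOneForm J b) x v w = ∑ j ∈ J, fderiv ℝ (b j) x v * w j := by
  have hderiv : HasFDerivAt (coordOneForm J b)
      (∑ j ∈ J, (fderiv ℝ (b j) x).smulRight (proj j : (Fin n → ℝ) →L[ℝ] ℝ)) x :=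
    .fun_sum fun j hj ↦ (hb j hj).hasFDerivAt.smul_const (proj j : (Fin n → ℝ) →L[ℝ] ℝ)
  simp [hderiv.fderiv]

/-- The projection of `ℝⁿ` onto the coordinates outside `J`; its fibres are the affine subspaces
spanned by the directions in `J`. -/
def transverseProj (J : Finset (Fin n)) : (Fin n → ℝ) →L[ℝ] ({j // j ∉ J} → ℝ) :=
  .pi fun j ↦ proj j.1

theorem transverseProj_surjective (J : Finset (Fin n)) :
    Function.Surjective (transverseProj J) :=
  Subtype.val_injective.surjective_comp_right

theorem transverseProj_eq_zero_iff {v : Fin n → ℝ} :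
    transverseProj J v = 0 ↔ ∀ j ∉ J, v j = 0 := by
  simp [transverseProj, funext_iff]

theorem isLeafwiseClosedOn_coordOneForm (hU : IsOpen U)
    (hb : ∀ j ∈ J, DifferentiableOn ℝ (b j) U)
    (hsymm : ∀ j ∈ J, ∀ k ∈ J, ∀ x ∈ U, pd (b j) k x = pd (b k) j x) :
    IsLeafwiseClosedOn (transverseProj J) (coordOneForm J b) U := by
  intro x hx v w hv hw
  have expand (v w : Fin n → ℝ) (hv : transverseProj J v = 0) :
      fderiv ℝ (coordOneForm J b) x v w = ∑ j ∈ J, ∑ k ∈ J, v k * pd (b j) k x * w j := by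
    rw [fderiv_coordOneForm_apply fun j hj ↦ (hb j hj).differentiableAt (hU.mem_nhds hx)]
    refine Finset.sum_congr rfl fun j _ ↦ ?_
    rw [fderiv_eq_sum_pd, ← Finset.sum_mul]
    congr 1
    exact (Finset.sum_subset J.subset_univ fun k _ hk ↦ by
      rw [transverseProj_eq_zero_iff.1 hv k hk, zero_mul]).symm
  rw [expand v w hv, expand w v hw, Finset.sum_comm]
  refine Finset.sum_congr rfl fun k hk ↦ Finset.sum_congr rfl fun j hj ↦ ?_
  rw [hsymm j hj k hk x hx]
  ring

theorem exists_contDiffOn_forall_pd_eq (hU : IsOpen U) (hconv : Convex ℝ U)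
    (hb : ∀ j ∈ J, ContDiffOn ℝ ∞ (b j) U)
    (hsymm : ∀ j ∈ J, ∀ k ∈ J, ∀ x ∈ U, pd (b j) k x = pd (b k) j x) :
    ∃ g : (Fin n → ℝ) → ℝ, ContDiffOn ℝ ∞ g U ∧ ∀ j ∈ J, ∀ x ∈ U, pd g j x = b j x := by
  have hform : ContDiffOn ℝ ∞ (coordOneForm J b) U :=
    ContDiffOn.sum fun j hj ↦ (hb j hj).smul contDiffOn_const
  have hclosed := isLeafwiseClosedOn_coordOneForm hU
    (fun j hj ↦ (hb j hj).differentiableOn (by simp)) hsymm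
  obtain ⟨g, hg, hg_leaf⟩ :=
    exists_leafwise_primitive (transverseProj_surjective J) hU hconv hform hclosed
  refine ⟨g, hg, fun j hj x hx ↦ ?_⟩
  have hj_tangent : transverseProj J (Pi.single j 1) = 0 :=
    transverseProj_eq_zero_iff.2 fun k hk ↦ Pi.single_eq_of_ne (ne_of_mem_of_not_mem hj hk).symm 1
  rw [pd, hg_leaf x hx _ hj_tangent, coordOneForm_apply]
  simp [Pi.single_apply, hj]

end Coordinates

section SemiHamiltonian

variable {n : ℕ} {K : Fin n → (Fin n → ℝ) → ℝ} {U : Set (Fin n → ℝ)}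

/-- The coefficient `(Kⱼ − Kᵢ)⁻¹ ∂Kᵢ/∂xʲ` of the semi-Hamiltonian conditions. At points where
`Kⱼ = Kᵢ` it takes the junk value `0`. -/
noncomputable def tsarevCoeff (K : Fin n → (Fin n → ℝ) → ℝ) (i j : Fin n) (x : Fin n → ℝ) : ℝ :=
  (K j x - K i x)⁻¹ * pd (K i) j x

theorem contDiffOn_tsarevCoeff {i j : Fin n} (hU : IsOpen U) (hKi : ContDiffOn ℝ ∞ (K i) U)
    (hKj : ContDiffOn ℝ ∞ (K j) U) (hne : ∀ x ∈ U, K j x ≠ K i x) :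
    ContDiffOn ℝ ∞ (tsarevCoeff K i j) U :=
  ((hKj.sub hKi).inv fun x hx ↦ sub_ne_zero.2 (hne x hx)).mul (contDiffOn_pd hU hKi j)

theorem SemiHamiltonian.pd_tsarevCoeff_comm (hSH : SemiHamiltonian K U) {i j k : Fin n}
    (hj : j ≠ i) (hk : k ≠ i) {x : Fin n → ℝ} (hx : x ∈ U) :
    pd (tsarevCoeff K i j) k x = pd (tsarevCoeff K i k) j x := by
  rcases eq_or_ne j k with rfl | hjk
  · rfl
  · exact hSH i j k hj.symm hjk hk.symm x hx

end SemiHamiltonian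

theorem exists_metric_of_semiHamiltonian {n : ℕ} (U : Set (Fin n → ℝ)) (hU : IsOpen U)
    (hconv : Convex ℝ U)
    (K : Fin n → (Fin n → ℝ) → ℝ)
    (hK : ∀ i, ContDiffOn ℝ (⊤ : ℕ∞) (K i) U)
    (hdist : ∀ i j : Fin n, i ≠ j → ∀ x ∈ U, K i x ≠ K j x)
    (hSH : SemiHamiltonian K U) :
    ∀ i : Fin n, ∃ g : (Fin n → ℝ) → ℝ, ContDiffOn ℝ (⊤ : ℕ∞) g U ∧
      ∀ j : Fin n, j ≠ i → ∀ x ∈ U,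
        pd g j x = (K j x - K i x)⁻¹ * pd (K i) j x := by
  intro i
  obtain ⟨g, hg, hgrad⟩ := exists_contDiffOn_forall_pd_eq (J := {i}ᶜ) (b := tsarevCoeff K i)
    hU hconv
    (fun j hj ↦ contDiffOn_tsarevCoeff hU (hK i) (hK j) (hdist j i (by simpa using hj)))
    (fun j hj k hk x hx ↦
      hSH.pd_tsarevCoeff_comm (by simpa using hj) (by simpa using hk) hx)
  exact ⟨g, hg, fun j hj ↦ hgrad j (by simpa using hj)⟩
end

section
/- Let U ⊆ ℝⁿ be open and let A₁,…,Aₙ : U → ℝ be smooth, and set A(x) = diag(A₁(x),…,Aₙ(x)). Let N be the Nijenhuis torsion of A, let 𝒦 = 3[N, A²] (Nijenhuis bracket of the (1,2)-tensor field N with the (1,1)-tensor field A²), and define the (1,3)-tensor fields M, Q, P pointwise by M(X,Y,Z) = N(X, A N(Y,Z)) + N(AX, N(Y,Z)) − N(N(X,Z), AY) + N(N(X,Y), AZ) − N(X, N(AY,Z)) − N(X, N(Y,AZ)); Q(X,Y,Z) = 𝒦(AX,AY,Z) − 𝒦(A²X,Y,Z) − 𝒦(X,AY,AZ) + 𝒦(AX,Y,AZ)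 + 4M(AX,Y,Z) − 2M(X,AY,Z) − 2M(X,Y,AZ); P(X,Y,Z) = A Q(X,AY,Z) + A Q(X,Y,AZ) − A² Q(X,Y,Z) − Q(X,AY,AZ), for X,Y,Z ∈ ℝⁿ. Then the components of P satisfy P^i_{jkl}(x) = 0 for all x ∈ U whenever i ∉ {j,k,l}. -/
open scoped BigOperators
open Matrix

/-- Components `N^i_{jk}` of the Nijenhuis torsion of a matrix-valued map `A`. -/
noncomputable def nijTorsion {n : ℕ} (A : (Fin n → ℝ) → Matrix (Fin n) (Fin n) ℝ)
    (x : Fin n → ℝ) (i j k : Fin n) : ℝ :=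
  ∑ s : Fin n,
    (A x s j * pd (fun y => A y i k) s x - A x s k * pd (fun y => A y i j) s x
      - A x i s * pd (fun y => A y s k) j x + A x i s * pd (fun y => A y s j) k x)

/-- Skew-symmetrization (with division) of a `3`-index array over its three indices. -/
noncomputable def skew3 {n : ℕ} (T : Fin n → Fin n → Fin n → ℝ) (j1 j2 j3 : Fin n) : ℝ :=
  (1 / 6 : ℝ) * ∑ π : Equiv.Perm (Fin 3),
    ((Equiv.Perm.sign π : ℤ) : ℝ) *
      T (![j1, j2, j3] (π 0)) (![j1, j2, j3] (π 1)) (![j1, j2, j3] (π 2))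

/-- Components of the Nijenhuis bracket `[Q, R]` of a `(1,2)`-tensor field `Q` (skew-symmetric
in its lower indices) with a `(1,1)`-tensor field `R`. -/
noncomputable def nijBracket {n : ℕ} (Q : (Fin n → ℝ) → Fin n → Fin n → Fin n → ℝ)
    (R : (Fin n → ℝ) → Matrix (Fin n) (Fin n) ℝ) (x : Fin n → ℝ)
    (i j1 j2 j3 : Fin n) : ℝ :=
  skew3 (fun a b c => ∑ s : Fin n,
    (Q x s a b * pd (fun y => R y i c) s x
      - R x s c * pd (fun y => Q y i a b) s x
      - 2 * Q x i s b * pd (fun y => R y s c) a x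
      + R x i s * pd (fun y => Q y s a b) c x)) j1 j2 j3

/-- The Nijenhuis torsion as a bilinear map on vectors: `N(X,Y)^i = Σ N^i_{jk} X^j Y^k`. -/
noncomputable def Nmap {n : ℕ} (A : (Fin n → ℝ) → Matrix (Fin n) (Fin n) ℝ)
    (x : Fin n → ℝ) (X Y : Fin n → ℝ) : Fin n → ℝ :=
  fun i => ∑ j : Fin n, ∑ k : Fin n, nijTorsion A x i j k * X j * Y k

/-- The `(1,3)`-tensor `𝒦 = 3[N, A²]` as a trilinear map on vectors. -/
noncomputable def Kmap {n : ℕ} (A : (Fin n → ℝ) → Matrix (Fin n) (Fin n) ℝ)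
    (x : Fin n → ℝ) (X Y Z : Fin n → ℝ) : Fin n → ℝ :=
  fun i => ∑ a : Fin n, ∑ b : Fin n, ∑ c : Fin n,
    3 * nijBracket (nijTorsion A) (fun y => A y * A y) x i a b c * X a * Y b * Z c

/-- The `(1,3)`-tensor `M`. -/
noncomputable def Mmap {n : ℕ} (A : (Fin n → ℝ) → Matrix (Fin n) (Fin n) ℝ)
    (x : Fin n → ℝ) (X Y Z : Fin n → ℝ) : Fin n → ℝ :=
  fun i =>
    Nmap A x X (A x *ᵥ Nmap A x Y Z) i + Nmap A x (A x *ᵥ X) (Nmap A x Y Z) i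
      - Nmap A x (Nmap A x X Z) (A x *ᵥ Y) i + Nmap A x (Nmap A x X Y) (A x *ᵥ Z) i
      - Nmap A x X (Nmap A x (A x *ᵥ Y) Z) i - Nmap A x X (Nmap A x Y (A x *ᵥ Z)) i

/-- The `(1,3)`-tensor `Q`. -/
noncomputable def Qmap {n : ℕ} (A : (Fin n → ℝ) → Matrix (Fin n) (Fin n) ℝ)
    (x : Fin n → ℝ) (X Y Z : Fin n → ℝ) : Fin n → ℝ :=
  fun i =>
    Kmap A x (A x *ᵥ X) (A x *ᵥ Y) Z i - Kmap A x ((A x * A x) *ᵥ X) Y Z i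
      - Kmap A x X (A x *ᵥ Y) (A x *ᵥ Z) i + Kmap A x (A x *ᵥ X) Y (A x *ᵥ Z) i
      + 4 * Mmap A x (A x *ᵥ X) Y Z i - 2 * Mmap A x X (A x *ᵥ Y) Z i
      - 2 * Mmap A x X Y (A x *ᵥ Z) i

/-- The `(1,3)`-tensor `P`. -/
noncomputable def Pmap {n : ℕ} (A : (Fin n → ℝ) → Matrix (Fin n) (Fin n) ℝ)
    (x : Fin n → ℝ) (X Y Z : Fin n → ℝ) : Fin n → ℝ :=
  fun i =>
    (A x *ᵥ Qmap A x X (A x *ᵥ Y) Z) i + (A x *ᵥ Qmap A x X Y (A x *ᵥ Z)) i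
      - ((A x * A x) *ᵥ Qmap A x X Y Z) i - Qmap A x X (A x *ᵥ Y) (A x *ᵥ Z) i

/-!
A constant coordinate hyperplane `{X | X i = 0}` which `A` preserves at every point near `x` is
preserved by `N`, `𝒦`, `M`, `Q` and `P` at `x`. Indeed, if all lower indices differ from `i`, then
each term in the `i`-th component of the torsion or bracket contains an entry of `A`, `A²` or `N`
with upper index `i` and lower indices different from `i`, or a derivative of one; such an entry
vanishes near `x`, and so do its derivatives. Hence `N` and `𝒦` map vectors in the hyperplane back
into it, and `M`, `Q`, `P` are sums of compositions of `N`, `𝒦` and `A`. A diagonal operator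
preserves all the coordinate hyperplanes.
-/

open Filter Topology

/-- The operator `B` leaves the coordinate hyperplane `{X | X i = 0}` invariant, that is, its `i`-th
row vanishes off the diagonal. -/
def PreservesCoordHyperplane {ι R : Type*} [Fintype ι] [NonUnitalNonAssocSemiring R]
    (B : Matrix ι ι R) (i : ι) : Prop :=
  ∀ ⦃X : ι → R⦄, X i = 0 → (B *ᵥ X) i = 0

theorem PreservesCoordHyperplane.apply_eq_zero {ι R : Type*} [Fintype ι] [NonAssocSemiring R]
    {B : Matrix ι ι R} {i c : ι} (hB : PreservesCoordHyperplane B i) (hc : i ≠ c) :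
    B i c = 0 := by
  classical
  simpa only [mulVec_single_one, col_apply] using hB (Pi.single_eq_of_ne hc 1)

theorem PreservesCoordHyperplane.mul {ι R : Type*} [Fintype ι] [NonUnitalSemiring R]
    {B C : Matrix ι ι R} {i : ι} (hB : PreservesCoordHyperplane B i)
    (hC : PreservesCoordHyperplane C i) : PreservesCoordHyperplane (B * C) i := by
  intro X hX
  rw [← mulVec_mulVec]
  exact hB (hC hX)

theorem preservesCoordHyperplane_diagonal {ι R : Type*} [Fintype ι] [DecidableEq ι]
    [NonUnitalNonAssocSemiring R] (d : ι → R) (i : ι) :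
    PreservesCoordHyperplane (diagonal d) i := by
  intro X hX
  rw [mulVec_diagonal, hX, mul_zero]

theorem contDiffOn_diagonal_apply {𝕜 E F ι : Type*} [NontriviallyNormedField 𝕜]
    [NormedAddCommGroup E] [NormedSpace 𝕜 E] [NormedAddCommGroup F] [NormedSpace 𝕜 F]
    [DecidableEq ι] {m : WithTop ℕ∞} {U : Set E} {d : ι → E → F}
    (hd : ∀ r, ContDiffOn 𝕜 m (d r) U) (r c : ι) :
    ContDiffOn 𝕜 m (fun y => diagonal (fun r => d r y) r c) U := by
  obtain rfl | hrc := eq_or_ne r c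
  · simpa only [diagonal_apply_eq] using hd r
  · simpa only [diagonal_apply_ne _ hrc] using contDiffOn_const

section

variable {n : ℕ} {x X Y Z : Fin n → ℝ} {i j k l : Fin n}

theorem pd_eq_zero_of_eventually_eq_zero {f : (Fin n → ℝ) → ℝ}
    (hf : ∀ᶠ y in 𝓝 x, f y = 0) : pd f j x = 0 := by
  have hf' : f =ᶠ[𝓝 x] fun _ => 0 := hf
  simp [pd, hf'.fderiv_eq]

theorem skew3_eq_zero {T : Fin n → Fin n → Fin n → ℝ} {p : Fin n → Prop}
    (hT : ∀ a b c, p a → p b → p c → T a b c = 0) (hj : p j) (hk : p k) (hl : p l) :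
    skew3 T j k l = 0 := by
  have hp : ∀ m, p (![j, k, l] m) := by
    simp [Fin.forall_fin_succ, hj, hk, hl]
  simp [skew3, hT _ _ _ (hp _) (hp _) (hp _)]

theorem nijBracket_eq_zero {T : (Fin n → ℝ) → Fin n → Fin n → Fin n → ℝ}
    {R : (Fin n → ℝ) → Matrix (Fin n) (Fin n) ℝ}
    (hT : ∀ᶠ y in 𝓝 x, ∀ a b, i ≠ a → i ≠ b → T y i a b = 0)
    (hR : ∀ᶠ y in 𝓝 x, PreservesCoordHyperplane (R y) i)
    (hj : i ≠ j) (hk : i ≠ k) (hl : i ≠ l) : nijBracket T R x i j k l = 0 := by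
  refine skew3_eq_zero (p := (i ≠ ·)) (fun a b c ha hb hc => ?_) hj hk hl
  have hdR (s) : pd (fun y => R y i c) s x = 0 :=
    pd_eq_zero_of_eventually_eq_zero (hR.mono fun y hy => hy.apply_eq_zero hc)
  have hdT (s) : pd (fun y => T y i a b) s x = 0 :=
    pd_eq_zero_of_eventually_eq_zero (hT.mono fun y hy => hy a b ha hb)
  refine Finset.sum_eq_zero fun s _ => ?_
  obtain rfl | hs := eq_or_ne i s
  · simp [hdR, hdT]
  · simp [hdR, hdT, hT.self_of_nhds s b hs hb, hR.self_of_nhds.apply_eq_zero hs]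

section

variable {A : (Fin n → ℝ) → Matrix (Fin n) (Fin n) ℝ}

theorem nijTorsion_eq_zero (hA : ∀ᶠ y in 𝓝 x, PreservesCoordHyperplane (A y) i)
    (hj : i ≠ j) (hk : i ≠ k) : nijTorsion A x i j k = 0 := by
  have hdA {c} (hc : i ≠ c) (s) : pd (fun y => A y i c) s x = 0 :=
    pd_eq_zero_of_eventually_eq_zero (hA.mono fun y hy => hy.apply_eq_zero hc)
  refine Finset.sum_eq_zero fun s _ => ?_
  obtain rfl | hs := eq_or_ne i s
  · simp [hdA hj, hdA hk]
  · simp [hdA hj, hdA hk, hA.self_of_nhds.apply_eq_zero hs]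

theorem Nmap_apply_eq_zero (hA : ∀ᶠ y in 𝓝 x, PreservesCoordHyperplane (A y) i)
    (hX : X i = 0) (hY : Y i = 0) : Nmap A x X Y i = 0 := by
  refine Finset.sum_eq_zero fun j _ => Finset.sum_eq_zero fun k _ => ?_
  obtain rfl | hj := eq_or_ne i j
  · simp [hX]
  obtain rfl | hk := eq_or_ne i k
  · simp [hY]
  simp [nijTorsion_eq_zero hA hj hk]

theorem Kmap_apply_eq_zero (hA : ∀ᶠ y in 𝓝 x, PreservesCoordHyperplane (A y) i)
    (hX : X i = 0) (hY : Y i = 0) (hZ : Z i = 0) : Kmap A x X Y Z i = 0 := by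
  have hN : ∀ᶠ y in 𝓝 x, ∀ a b, i ≠ a → i ≠ b → nijTorsion A y i a b = 0 :=
    hA.eventually_nhds.mono fun _ hy _ _ => nijTorsion_eq_zero hy
  refine Finset.sum_eq_zero fun j _ => Finset.sum_eq_zero fun k _ =>
    Finset.sum_eq_zero fun l _ => ?_
  obtain rfl | hj := eq_or_ne i j
  · simp [hX]
  obtain rfl | hk := eq_or_ne i k
  · simp [hY]
  obtain rfl | hl := eq_or_ne i l
  · simp [hZ]
  simp [nijBracket_eq_zero hN (hA.mono fun _ hy => hy.mul hy) hj hk hl]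

theorem Mmap_apply_eq_zero (hA : ∀ᶠ y in 𝓝 x, PreservesCoordHyperplane (A y) i)
    (hX : X i = 0) (hY : Y i = 0) (hZ : Z i = 0) : Mmap A x X Y Z i = 0 := by
  have hAx := hA.self_of_nhds
  have hN {V W : Fin n → ℝ} (hV : V i = 0) (hW : W i = 0) : Nmap A x V W i = 0 :=
    Nmap_apply_eq_zero hA hV hW
  simp only [Mmap, hN hX (hAx (hN hY hZ)), hN (hAx hX) (hN hY hZ), hN (hN hX hZ) (hAx hY),
    hN (hN hX hY) (hAx hZ), hN hX (hN (hAx hY) hZ), hN hX (hN hY (hAx hZ)), add_zero, sub_zero]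

theorem Qmap_apply_eq_zero (hA : ∀ᶠ y in 𝓝 x, PreservesCoordHyperplane (A y) i)
    (hX : X i = 0) (hY : Y i = 0) (hZ : Z i = 0) : Qmap A x X Y Z i = 0 := by
  have hAx := hA.self_of_nhds
  simp only [Qmap, Kmap_apply_eq_zero hA (hAx hX) (hAx hY) hZ,
    Kmap_apply_eq_zero hA (hAx.mul hAx hX) hY hZ, Kmap_apply_eq_zero hA hX (hAx hY) (hAx hZ),
    Kmap_apply_eq_zero hA (hAx hX) hY (hAx hZ), Mmap_apply_eq_zero hA (hAx hX) hY hZ,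
    Mmap_apply_eq_zero hA hX (hAx hY) hZ, Mmap_apply_eq_zero hA hX hY (hAx hZ),
    mul_zero, add_zero, sub_zero]

theorem Pmap_apply_eq_zero (hA : ∀ᶠ y in 𝓝 x, PreservesCoordHyperplane (A y) i)
    (hX : X i = 0) (hY : Y i = 0) (hZ : Z i = 0) : Pmap A x X Y Z i = 0 := by
  have hAx := hA.self_of_nhds
  simp only [Pmap, hAx (Qmap_apply_eq_zero hA hX (hAx hY) hZ),
    hAx (Qmap_apply_eq_zero hA hX hY (hAx hZ)), hAx.mul hAx (Qmap_apply_eq_zero hA hX hY hZ),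
    Qmap_apply_eq_zero hA hX (hAx hY) (hAx hZ), add_zero, sub_zero]

/-- Order `2` is what `P` needs: `𝒦` differentiates `N`, which contains first derivatives of `A`. -/
theorem P_components_vanish_off_index_general {U : Set (Fin n → ℝ)} (hU : IsOpen U)
    (_hA : ∀ r c, ContDiffOn ℝ 2 (fun y => A y r c) U)
    (hi : ∀ y ∈ U, PreservesCoordHyperplane (A y) i) (hx : x ∈ U)
    (hX : X i = 0) (hY : Y i = 0) (hZ : Z i = 0) : Pmap A x X Y Z i = 0 :=
  Pmap_apply_eq_zero ((hU.eventually_mem hx).mono hi) hX hY hZ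

end

end

theorem P_components_vanish_off_index {n : ℕ} (U : Set (Fin n → ℝ)) (hU : IsOpen U)
    (A : Fin n → (Fin n → ℝ) → ℝ)
    (hA : ∀ i, ContDiffOn ℝ (⊤ : ℕ∞) (A i) U) :
    ∀ x ∈ U, ∀ i j k l : Fin n, i ≠ j → i ≠ k → i ≠ l →
      Pmap (fun y => Matrix.diagonal (fun r => A r y)) x
        (Pi.single j 1) (Pi.single k 1) (Pi.single l 1) i = 0 := by
  intro x hx i j k l hj hk hl
  exact P_components_vanish_off_index_general hU
    (contDiffOn_diagonal_apply fun r => contDiffOn_infty.1 (hA r) 2)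
    (fun _ _ => preservesCoordHyperplane_diagonal _ i) hx
    (Pi.single_eq_of_ne hj 1) (Pi.single_eq_of_ne hk 1) (Pi.single_eq_of_ne hl 1)
end
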